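/- arXiv:2310.02666 — 11 statements merged into one kernel-verified Lean document; each statement's English description precedes it below -/
import Mathlib

section
/- Let ψ1(c) = -160c² + 16c³ + 20c⁴ - 4c⁵ + (5/4)c⁶, ψ2(c) = 32c + 48c² + 32c³ + 14c⁴ - 10c⁵ - (13/2)c⁶ and ψ3(c) = -256 + 64c + 276c² - 48c³ - 82c⁴ + 8c⁵ + (29/4)c⁶. Then ψ1(c) + ψ2(c) + ψ3(c) ≤ 0 for every real c with 87137/250000 < c ≤ 4511/4000. -/
theorem psi1_add_psi2_add_psi3_nonpos (c : ℝ) (hc0 : 87137 / 250000 < c)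
    (hc2 : c ≤ 4511 / 4000) :
    (-160 * c ^ 2 + 16 * c ^ 3 + 20 * c ^ 4 - 4 * c ^ 5 + (5 / 4) * c ^ 6) +
      (32 * c + 48 * c ^ 2 + 32 * c ^ 3 + 14 * c ^ 4 - 10 * c ^ 5 - (13 / 2) * c ^ 6) +
      (-256 + 64 * c + 276 * c ^ 2 - 48 * c ^ 3 - 82 * c ^ 4 + 8 * c ^ 5 + (29 / 4) * c ^ 6) ≤ 0 := by
  have h0 : 0 < c := by linarith
  have h1 : 0 ≤ c ^ 5 * (3 - c) := mul_nonneg (by positivity) (by linarith)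
  have h2 : 0 ≤ (c ^ 2 - 5 / 4) ^ 2 := sq_nonneg _
  have h3 : 0 ≤ (4511 / 4000 - c) * c := mul_nonneg (by linarith) h0.le
  nlinarith [h1, h2, h3]
end

section
/- Let Ψ(c,x) = 320 + ψ1(c) + ψ2(c)x + ψ3(c)x² + ψ4(c)x³ + ψ5(c)x⁴. Then Ψ(c,x) ≤ 320 for all real c, x with 0 ≤ c ≤ 87137/250000 and 0 < x < 1/4. -/
theorem Psi_le_320_small_c (c x : ℝ) (hc0 : 0 ≤ c) (hc1 : c ≤ 87137 / 250000)
    (hx0 : 0 < x) (hx1 : x < 1 / 4) :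
    320 + (-160 * c ^ 2 + 16 * c ^ 3 + 20 * c ^ 4 - 4 * c ^ 5 + (5 / 4) * c ^ 6) +
      (32 * c + 48 * c ^ 2 + 32 * c ^ 3 + 14 * c ^ 4 - 10 * c ^ 5 - (13 / 2) * c ^ 6) * x +
      (-256 + 64 * c + 276 * c ^ 2 - 48 * c ^ 3 - 82 * c ^ 4 + 8 * c ^ 5 + (29 / 4) * c ^ 6) * x ^ 2 +
      (320 - 32 * c - 272 * c ^ 2 - 32 * c ^ 3 + 76 * c ^ 4 + 10 * c ^ 5 - 7 * c ^ 6) * x ^ 3 +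
      (-64 - 64 * c + 48 * c ^ 2 + 32 * c ^ 3 - 12 * c ^ 4 - 4 * c ^ 5 + c ^ 6) * x ^ 4 ≤ 320 := by
  have h : c ≤ 7 / 20 := by linarith
  have p2 : 0 ≤ c ^ 2 := by positivity
  have p3 : 0 ≤ c ^ 3 := by positivity
  have p4 : 0 ≤ c ^ 4 := by positivity
  have p5 : 0 ≤ c ^ 5 := by positivity
  have p6 : 0 ≤ c ^ 6 := by positivity
  have b2 : c ^ 2 ≤ (7 / 20) ^ 2 := by gcongr
  have b3 : c ^ 3 ≤ (7 / 20) ^ 3 := by gcongr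
  have b4 : c ^ 4 ≤ (7 / 20) ^ 4 := by gcongr
  have b5 : c ^ 5 ≤ (7 / 20) ^ 5 := by gcongr
  have b6 : c ^ 6 ≤ (7 / 20) ^ 6 := by gcongr
  norm_num at b2 b3 b4 b5 b6
  -- bound each coefficient
  have h1 : (-160 + 16 * c + 20 * c ^ 2 - 4 * c ^ 3 + (5 / 4) * c ^ 4) * c ^ 2
      ≤ (-151) * c ^ 2 :=
    mul_le_mul_of_nonneg_right (by linarith) p2
  have h2 : (32 + 48 * c + 32 * c ^ 2 + 14 * c ^ 3 - 10 * c ^ 4 - (13 / 2) * c ^ 5) * (c * x)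
      ≤ 54 * (c * x) :=
    mul_le_mul_of_nonneg_right (by linarith) (by positivity)
  have h3 : (-256 + 64 * c + 276 * c ^ 2 - 48 * c ^ 3 - 82 * c ^ 4 + 8 * c ^ 5
      + (29 / 4) * c ^ 6) * x ^ 2 ≤ (-199) * x ^ 2 :=
    mul_le_mul_of_nonneg_right (by linarith) (by positivity)
  have h4 : (320 - 32 * c - 272 * c ^ 2 - 32 * c ^ 3 + 76 * c ^ 4 + 10 * c ^ 5
      - 7 * c ^ 6) * x ^ 3 ≤ 330 * x ^ 3 :=
    mul_le_mul_of_nonneg_right (by linarith) (by positivity)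
  have h5 : (-64 - 64 * c + 48 * c ^ 2 + 32 * c ^ 3 - 12 * c ^ 4 - 4 * c ^ 5 + c ^ 6) * x ^ 4
      ≤ 0 * x ^ 4 :=
    mul_le_mul_of_nonneg_right (by linarith) (by positivity)
  have h6 : x * x ^ 2 ≤ 1 / 4 * x ^ 2 :=
    mul_le_mul_of_nonneg_right hx1.le (by positivity)
  have h7 : 0 ≤ (c - x) ^ 2 := sq_nonneg _
  have h8 : 0 ≤ x ^ 2 := sq_nonneg _
  linarith
end

section
/- Let Φ(c,x) = φ1(x) + φ2(x)c + φ3(x)c² + φ4(x)c³ + φ5(x)c⁴ + φ6(x)c⁵ + φ7(x)c⁶, where φ1(x) = -256x² + 320x³ - 64x⁴, φ2(x) = 32x + 64x² - 32x³ - 64x⁴, φ3(x) = -160 + 48x + 276x² - 272x³ + 48x⁴, φ4(x) = 16 + 32x - 48x² - 32x³ + 32x⁴, φ5(x) = 20 + 14x - 82x² + 76x³ - 12x⁴, φ6(x) = -4 - 10x + 8x² + 10x³ - 4x⁴, φ7(x) = 5/4 - (13/2)x + (29/4)x² - 7x³ + x⁴. Then Φ(c,x) < 0 for all real c, x with 0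 ≤ c ≤ 87137/250000 and 1/4 ≤ x < 1. -/
theorem Phi_neg (c x : ℝ) (hc0 : 0 ≤ c) (hc1 : c ≤ 87137 / 250000)
    (hx0 : 1 / 4 ≤ x) (hx1 : x < 1) :
    (-256 * x ^ 2 + 320 * x ^ 3 - 64 * x ^ 4) +
      (32 * x + 64 * x ^ 2 - 32 * x ^ 3 - 64 * x ^ 4) * c +
      (-160 + 48 * x + 276 * x ^ 2 - 272 * x ^ 3 + 48 * x ^ 4) * c ^ 2 +
      (16 + 32 * x - 48 * x ^ 2 - 32 * x ^ 3 + 32 * x ^ 4) * c ^ 3 +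
      (20 + 14 * x - 82 * x ^ 2 + 76 * x ^ 3 - 12 * x ^ 4) * c ^ 4 +
      (-4 - 10 * x + 8 * x ^ 2 + 10 * x ^ 3 - 4 * x ^ 4) * c ^ 5 +
      (5 / 4 - (13 / 2) * x + (29 / 4) * x ^ 2 - 7 * x ^ 3 + x ^ 4) * c ^ 6 < 0 := by
  have hx : 0 < x := by linarith
  have h1 : 0 < 1 - x := by linarith
  have hc : c ≤ 7 / 20 := by linarith
  have p2 : x ^ 2 ≤ x := by nlinarith
  have p3 : x ^ 3 ≤ x ^ 2 := by nlinarith [pow_pos hx 2]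
  have p4 : x ^ 4 ≤ x ^ 3 := by nlinarith [pow_pos hx 3]
  have q4 : 0 < x ^ 4 := pow_pos hx 4
  have hB : 0 < 2 * x * (4 - x) - (1 + x) * (1 + 2 * x) * c := by
    have : (1 + x) * (1 + 2 * x) * c ≤ (1 + x) * (1 + 2 * x) * (7 / 20) := by gcongr
    nlinarith [mul_nonneg (sub_nonneg.2 hx0) h1.le]
  have hA : 0 < 32 * x * (1 - x) * (2 * x * (4 - x) - (1 + x) * (1 + 2 * x) * c) := by
    positivity
  have e3 : -160 + 48 * x + 276 * x ^ 2 - 272 * x ^ 3 + 48 * x ^ 4 ≤ -50 := by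
    nlinarith [mul_nonneg hx.le (sq_nonneg (x - 19 / 20)), sq_nonneg (x - 19 / 20),
      mul_nonneg h1.le (sq_nonneg (x - 19 / 20)), sq_nonneg (x * (x - 19 / 20))]
  have e4 : 16 + 32 * x - 48 * x ^ 2 - 32 * x ^ 3 + 32 * x ^ 4 ≤ 48 := by linarith
  have e5 : 20 + 14 * x - 82 * x ^ 2 + 76 * x ^ 3 - 12 * x ^ 4 ≤ 40 := by linarith
  have e6 : -4 - 10 * x + 8 * x ^ 2 + 10 * x ^ 3 - 4 * x ^ 4 ≤ 10 := by linarith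
  have e7 : 5 / 4 - (13 / 2) * x + (29 / 4) * x ^ 2 - 7 * x ^ 3 + x ^ 4 ≤ 10 := by linarith
  have f3 := mul_le_mul_of_nonneg_right e3 (pow_nonneg hc0 2)
  have f4 := mul_le_mul_of_nonneg_right e4 (pow_nonneg hc0 3)
  have f5 := mul_le_mul_of_nonneg_right e5 (pow_nonneg hc0 4)
  have f6 := mul_le_mul_of_nonneg_right e6 (pow_nonneg hc0 5)
  have f7 := mul_le_mul_of_nonneg_right e7 (pow_nonneg hc0 6)
  have g3 : c ^ 3 ≤ 7 / 20 * c ^ 2 := by nlinarith [pow_nonneg hc0 2]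
  have g4 : c ^ 4 ≤ 7 / 20 * c ^ 3 := by nlinarith [pow_nonneg hc0 3]
  have g5 : c ^ 5 ≤ 7 / 20 * c ^ 4 := by nlinarith [pow_nonneg hc0 4]
  have g6 : c ^ 6 ≤ 7 / 20 * c ^ 5 := by nlinarith [pow_nonneg hc0 5]
  have g2 := pow_nonneg hc0 2
  linarith
end

section
/- Let Γ(c,x) = γ1(x) + γ2(x)c + γ3(x)c² + γ4(x)c³ + γ5(x)c⁴ + γ6(x)c⁵ + γ7(x)c⁶, where γ1(x) = -256x² + 320x³ - 64x⁴, γ2(x) = 96x² - 32x³ - 64x⁴, γ3(x) = 164x² - 272x³ + 48x⁴, γ4(x) = -32x³ + 32x⁴, γ5(x) = -48x² + 76x³ - 12x⁴, γ6(x) = -6x² + 10x³ - 4x⁴, γ7(x) = 2x² - 7x³ + x⁴. Then Γ(c,x) < 0 for all real c, x with 87137/250000 < c ≤ 1 and 3/5 ≤ x < 1. -/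
theorem Gamma_neg (c x : ℝ) (hc0 : 87137 / 250000 < c) (hc1 : c ≤ 1)
    (hx0 : 3 / 5 ≤ x) (hx1 : x < 1) :
    (-256 * x ^ 2 + 320 * x ^ 3 - 64 * x ^ 4) +
      (96 * x ^ 2 - 32 * x ^ 3 - 64 * x ^ 4) * c +
      (164 * x ^ 2 - 272 * x ^ 3 + 48 * x ^ 4) * c ^ 2 +
      (-32 * x ^ 3 + 32 * x ^ 4) * c ^ 3 +
      (-48 * x ^ 2 + 76 * x ^ 3 - 12 * x ^ 4) * c ^ 4 +
      (-6 * x ^ 2 + 10 * x ^ 3 - 4 * x ^ 4) * c ^ 5 +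
      (2 * x ^ 2 - 7 * x ^ 3 + x ^ 4) * c ^ 6 < 0 := by
  have c0 : 0 < c := by linarith
  have h2 : 0 < c ^ 2 := by positivity
  have h6 : 0 < c ^ 6 := by positivity
  have h5 : 0 < c ^ 5 := by positivity
  have h4 : 0 < c ^ 4 := by positivity
  have k2 : c ^ 2 ≤ c := by nlinarith
  have k3 : c ^ 3 ≤ c ^ 2 := by nlinarith
  have k4 : c ^ 4 ≤ c ^ 3 := by nlinarith [pow_pos c0 3]
  have k5 : c ^ 5 ≤ c ^ 4 := by nlinarith
  have k6 : c ^ 6 ≤ c ^ 5 := by nlinarith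
  have P : -60*c^2+16*c^4-4*c^6 < 0 := by linarith
  have D : -64-64*c+48*c^2+32*c^3-12*c^4-4*c^5+c^6 ≤ 0 := by linarith
  have Q : 5*(-60*c^2+16*c^4-4*c^6)
      + 2*(-(192-160*c-176*c^2+32*c^3+52*c^4+2*c^5-5*c^6)) < 0 := by
    nlinarith [mul_nonneg h4.le (sub_nonneg.2 hc1)]
  have hx : 0 < x ^ 2 := by positivity
  have R : (-60*c^2+16*c^4-4*c^6)
      + (1-x)*(-(192-160*c-176*c^2+32*c^3+52*c^4+2*c^5-5*c^6))
      + (1-x)^2*(-64-64*c+48*c^2+32*c^3-12*c^4-4*c^5+c^6) < 0 := by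
    have a := mul_nonneg (sq_nonneg (1-x)) (neg_nonneg.2 D)
    have b := mul_pos (sub_pos.2 hx1) (neg_pos.2 Q)
    have d := mul_nonneg (sub_nonneg.2 hx0) (neg_pos.2 P).le
    linarith
  have S := mul_pos hx (neg_pos.2 R)
  linarith
end

section
/- Let Ψ(c,x) = 320 + ψ1(c) + ψ2(c)x + ψ3(c)x² + ψ4(c)x³ + ψ5(c)x⁴. Then Ψ(c,x) ≤ 320 for all real c, x with 1 < c ≤ 4511/4000 and 3/5 ≤ x ≤ 1. -/
set_option maxHeartbeats 4000000 in
theorem Psi_le_320_c_gt_one (c x : ℝ) (hc0 : 1 < c) (hc1 : c ≤ 4511 / 4000)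
    (hx0 : 3 / 5 ≤ x) (hx1 : x ≤ 1) :
    320 + (-160 * c ^ 2 + 16 * c ^ 3 + 20 * c ^ 4 - 4 * c ^ 5 + (5 / 4) * c ^ 6) +
      (32 * c + 48 * c ^ 2 + 32 * c ^ 3 + 14 * c ^ 4 - 10 * c ^ 5 - (13 / 2) * c ^ 6) * x +
      (-256 + 64 * c + 276 * c ^ 2 - 48 * c ^ 3 - 82 * c ^ 4 + 8 * c ^ 5 + (29 / 4) * c ^ 6) * x ^ 2 +
      (320 - 32 * c - 272 * c ^ 2 - 32 * c ^ 3 + 76 * c ^ 4 + 10 * c ^ 5 - 7 * c ^ 6) * x ^ 3 +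
      (-64 - 64 * c + 48 * c ^ 2 + 32 * c ^ 3 - 12 * c ^ 4 - 4 * c ^ 5 + c ^ 6) * x ^ 4 ≤ 320 := by
  obtain ⟨d, rfl⟩ : ∃ d, c = 1 + d := ⟨c - 1, by ring⟩
  have hd : 0 ≤ d := by linarith
  obtain ⟨y, rfl⟩ : ∃ y, x = 1 - y := ⟨1 - x, by ring⟩
  have hy : 0 ≤ y := by linarith
  have hz : 0 ≤ 2 / 5 - y := by linarith
  have b1 := mul_nonneg hy hz
  have b2 := mul_nonneg (mul_nonneg hy hy) hz
  have b3 := mul_nonneg (mul_nonneg hy hz) hz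
  have b4 := mul_nonneg (mul_nonneg hy hy) (mul_nonneg hy hz)
  have b5 := mul_nonneg (mul_nonneg hy hy) (mul_nonneg hz hz)
  have b6 := mul_nonneg (mul_nonneg hy hz) (mul_nonneg hz hz)
  have b7 := mul_nonneg (mul_nonneg hy hy) (mul_nonneg hy hy)
  have b8 := mul_nonneg (mul_nonneg hz hz) (mul_nonneg hz hz)
  have h0 : (-126.75) + (109.5) * (1 - y) ^ 1 + (-30.75) * (1 - y) ^ 2 + (63) * (1 - y) ^ 3 + (-63) * (1 - y) ^ 4 ≤ (0 : ℝ) := by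
    linarith [b1, b2, b3, b4, b5, b6, b7, b8]
  have k0 := mul_nonneg (neg_nonneg.mpr h0) (pow_nonneg hd 0)
  have h1 : (-204.5) + (191) * (1 - y) ^ 1 + (227.5) * (1 - y) ^ 2 + (-360) * (1 - y) ^ 3 + (66) * (1 - y) ^ 4 ≤ (0 : ℝ) := by
    linarith [b1, b2, b3, b4, b5, b6, b7, b8]
  have k1 := mul_nonneg (neg_nonneg.mpr h1) (pow_nonneg hd 1)
  have h2 : (-13.25) + (30.5) * (1 - y) ^ 1 + (-171.25) * (1 - y) ^ 2 + (83) * (1 - y) ^ 3 + (47) * (1 - y) ^ 4 ≤ (0 : ℝ) := by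
    linarith [b1, b2, b3, b4, b5, b6, b7, b8]
  have k2 := mul_nonneg (neg_nonneg.mpr h2) (pow_nonneg hd 2)
  have h3 : (81) + (-142) * (1 - y) ^ 1 + (-151) * (1 - y) ^ 2 + (232) * (1 - y) ^ 3 + (-36) * (1 - y) ^ 4 ≤ (0 : ℝ) := by
    linarith [b1, b2, b3, b4, b5, b6, b7, b8]
  have k3 := mul_nonneg (neg_nonneg.mpr h3) (pow_nonneg hd 3)
  have h4 : (18.75) + (-133.5) * (1 - y) ^ 1 + (66.75) * (1 - y) ^ 2 + (21) * (1 - y) ^ 3 + (-17) * (1 - y) ^ 4 ≤ (0 : ℝ) := by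
    linarith [b1, b2, b3, b4, b5, b6, b7, b8]
  have k4 := mul_nonneg (neg_nonneg.mpr h4) (pow_nonneg hd 4)
  have h5 : (3.5) + (-49) * (1 - y) ^ 1 + (51.5) * (1 - y) ^ 2 + (-32) * (1 - y) ^ 3 + (2) * (1 - y) ^ 4 ≤ (0 : ℝ) := by
    linarith [b1, b2, b3, b4, b5, b6, b7, b8]
  have k5 := mul_nonneg (neg_nonneg.mpr h5) (pow_nonneg hd 5)
  have h6 : (1.25) + (-6.5) * (1 - y) ^ 1 + (7.25) * (1 - y) ^ 2 + (-7) * (1 - y) ^ 3 + (1) * (1 - y) ^ 4 ≤ (0 : ℝ) := by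
    linarith [b1, b2, b3, b4, b5, b6, b7, b8]
  have k6 := mul_nonneg (neg_nonneg.mpr h6) (pow_nonneg hd 6)
  linarith [k0, k1, k2, k3, k4, k5, k6]
end

section
/- Let Ψ(c,x) = 320 + ψ1(c) + ψ2(c)x + ψ3(c)x² + ψ4(c)x³ + ψ5(c)x⁴. Then Ψ(c,x) ≤ 320 for all real c, x with 4511/4000 < c ≤ 2 and 0 ≤ x ≤ 1. -/
/-- Bernstein criterion for degree six on `[9/8, 2]`: the products of powers of the
distances to the end points are nonnegative. -/
lemma bern_prod_nonneg (c : ℝ) (h0 : 9 / 8 ≤ c) (h1 : c ≤ 2) (i j : ℕ) :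
    0 ≤ (c - 9 / 8) ^ i * (2 - c) ^ j :=
  mul_nonneg (pow_nonneg (by linarith) i) (pow_nonneg (by linarith) j)

lemma bern0 (c : ℝ) (h0 : 9 / 8 ≤ c) (h1 : c ≤ 2) :
    (0) * c ^ 0 + (0) * c ^ 1 + (-160) * c ^ 2 + (16) * c ^ 3 + (20) * c ^ 4 + (-4) * c ^ 5 + (5/4) * c ^ 6 ≤ 0 := by
  have h := bern_prod_nonneg c h0 h1
  linarith [h 0 6, h 1 5, h 2 4, h 3 3, h 4 2, h 5 1, h 6 0]

lemma bern1 (c : ℝ) (h0 : 9 / 8 ≤ c) (h1 : c ≤ 2) :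
    (0) * c ^ 0 + (32) * c ^ 1 + (-592) * c ^ 2 + (96) * c ^ 3 + (94) * c ^ 4 + (-26) * c ^ 5 + (-3/2) * c ^ 6 ≤ 0 := by
  have h := bern_prod_nonneg c h0 h1
  linarith [h 0 6, h 1 5, h 2 4, h 3 3, h 4 2, h 5 1, h 6 0]

lemma bern2 (c : ℝ) (h0 : 9 / 8 ≤ c) (h1 : c ≤ 2) :
    (-256) * c ^ 0 + (160) * c ^ 1 + (-540) * c ^ 2 + (144) * c ^ 3 + (80) * c ^ 4 + (-46) * c ^ 5 + (-19/4) * c ^ 6 ≤ 0 := by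
  have h := bern_prod_nonneg c h0 h1
  linarith [h 0 6, h 1 5, h 2 4, h 3 3, h 4 2, h 5 1, h 6 0]

lemma bern3 (c : ℝ) (h0 : 9 / 8 ≤ c) (h1 : c ≤ 2) :
    (-192) * c ^ 0 + (192) * c ^ 1 + (-216) * c ^ 2 + (32) * c ^ 3 + (34) * c ^ 4 + (-20) * c ^ 5 + (-7) * c ^ 6 ≤ 0 := by
  have h := bern_prod_nonneg c h0 h1
  linarith [h 0 6, h 1 5, h 2 4, h 3 3, h 4 2, h 5 1, h 6 0]

lemma bern4 (c : ℝ) (h0 : 9 / 8 ≤ c) (h1 : c ≤ 2) :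
    (0) * c ^ 0 + (0) * c ^ 1 + (-60) * c ^ 2 + (0) * c ^ 3 + (16) * c ^ 4 + (0) * c ^ 5 + (-4) * c ^ 6 ≤ 0 := by
  have h := bern_prod_nonneg c h0 h1
  linarith [h 0 6, h 1 5, h 2 4, h 3 3, h 4 2, h 5 1, h 6 0]

theorem Psi_le_320_large_c (c x : ℝ) (hc0 : 4511 / 4000 < c) (hc1 : c ≤ 2)
    (hx0 : 0 ≤ x) (hx1 : x ≤ 1) :
    320 + (-160 * c ^ 2 + 16 * c ^ 3 + 20 * c ^ 4 - 4 * c ^ 5 + (5 / 4) * c ^ 6) +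
      (32 * c + 48 * c ^ 2 + 32 * c ^ 3 + 14 * c ^ 4 - 10 * c ^ 5 - (13 / 2) * c ^ 6) * x +
      (-256 + 64 * c + 276 * c ^ 2 - 48 * c ^ 3 - 82 * c ^ 4 + 8 * c ^ 5 + (29 / 4) * c ^ 6) * x ^ 2 +
      (320 - 32 * c - 272 * c ^ 2 - 32 * c ^ 3 + 76 * c ^ 4 + 10 * c ^ 5 - 7 * c ^ 6) * x ^ 3 +
      (-64 - 64 * c + 48 * c ^ 2 + 32 * c ^ 3 - 12 * c ^ 4 - 4 * c ^ 5 + c ^ 6) * x ^ 4 ≤ 320 := by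
  have h0 : 9 / 8 ≤ c := by linarith
  have hy : 0 ≤ 1 - x := by linarith
  have b0 := mul_nonneg (neg_nonneg.mpr (bern0 c h0 hc1)) (mul_nonneg (pow_nonneg hx0 0) (pow_nonneg hy 4))
  have b1 := mul_nonneg (neg_nonneg.mpr (bern1 c h0 hc1)) (mul_nonneg (pow_nonneg hx0 1) (pow_nonneg hy 3))
  have b2 := mul_nonneg (neg_nonneg.mpr (bern2 c h0 hc1)) (mul_nonneg (pow_nonneg hx0 2) (pow_nonneg hy 2))
  have b3 := mul_nonneg (neg_nonneg.mpr (bern3 c h0 hc1)) (mul_nonneg (pow_nonneg hx0 3) (pow_nonneg hy 1))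
  have b4 := mul_nonneg (neg_nonneg.mpr (bern4 c h0 hc1)) (mul_nonneg (pow_nonneg hx0 4) (pow_nonneg hy 0))
  linarith [b0, b1, b2, b3, b4]
end

section
/- Let Ψ(c,x) = 320 + ψ1(c) + ψ2(c)x + ψ3(c)x² + ψ4(c)x³ + ψ5(c)x⁴. Then Ψ(c,x) ≤ 320 for all real c, x with 0 ≤ c ≤ 2 and 0 ≤ x ≤ 1. -/
/-- Nonnegativity of the Bernstein form of `320 - Ψ - 16 (1 - x) (c - x)²`,
with `d = 2 - c` and `y = 1 - x`. -/
lemma psi_bernstein_form_nonneg (c d x y : ℝ) (hc : 0 ≤ c) (hd : 0 ≤ d) (hx : 0 ≤ x) (hy : 0 ≤ y) :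
    0 ≤ 16 * y * (c - x) ^ 2 +
      c ^ 0 * d ^ 6 * ((15/4) * x ^ 2 * y ^ 2 +
        (11/4) * x ^ 3 * y ^ 1) +
      c ^ 1 * d ^ 5 * ((39/2) * x ^ 2 * y ^ 2 +
        (23/2) * x ^ 3 * y ^ 1) +
      c ^ 2 * d ^ 4 * ((9) * x ^ 0 * y ^ 4 +
        (34) * x ^ 1 * y ^ 3 +
        (72) * x ^ 2 * y ^ 2 +
        (115/4) * x ^ 3 * y ^ 1 +
        (15/4) * x ^ 4 * y ^ 0) +
      c ^ 3 * d ^ 3 * ((34) * x ^ 0 * y ^ 4 +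
        (124) * x ^ 1 * y ^ 3 +
        (150) * x ^ 2 * y ^ 2 +
        (51) * x ^ 3 * y ^ 1 +
        (15) * x ^ 4 * y ^ 0) +
      c ^ 4 * d ^ 2 * ((43) * x ^ 0 * y ^ 4 +
        (289/2) * x ^ 1 * y ^ 3 +
        (547/4) * x ^ 2 * y ^ 2 +
        (183/4) * x ^ 3 * y ^ 1 +
        (37/2) * x ^ 4 * y ^ 0) +
      c ^ 5 * d ^ 1 * ((22) * x ^ 0 * y ^ 4 +
        (66) * x ^ 1 * y ^ 3 +
        (119/2) * x ^ 2 * y ^ 2 +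
        (45/2) * x ^ 3 * y ^ 1 +
        (7) * x ^ 4 * y ^ 0) +
      c ^ 6 * d ^ 0 * ((11/4) * x ^ 0 * y ^ 4 +
        (13) * x ^ 1 * y ^ 3 +
        (85/4) * x ^ 2 * y ^ 2 +
        (59/4) * x ^ 3 * y ^ 1 +
        (15/4) * x ^ 4 * y ^ 0) := by
  have h := sq_nonneg (c - x)
  positivity

theorem Psi_le_320 (c x : ℝ) (hc0 : 0 ≤ c) (hc1 : c ≤ 2)
    (hx0 : 0 ≤ x) (hx1 : x ≤ 1) :
    320 + (-160 * c ^ 2 + 16 * c ^ 3 + 20 * c ^ 4 - 4 * c ^ 5 + (5 / 4) * c ^ 6) +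
      (32 * c + 48 * c ^ 2 + 32 * c ^ 3 + 14 * c ^ 4 - 10 * c ^ 5 - (13 / 2) * c ^ 6) * x +
      (-256 + 64 * c + 276 * c ^ 2 - 48 * c ^ 3 - 82 * c ^ 4 + 8 * c ^ 5 + (29 / 4) * c ^ 6) * x ^ 2 +
      (320 - 32 * c - 272 * c ^ 2 - 32 * c ^ 3 + 76 * c ^ 4 + 10 * c ^ 5 - 7 * c ^ 6) * x ^ 3 +
      (-64 - 64 * c + 48 * c ^ 2 + 32 * c ^ 3 - 12 * c ^ 4 - 4 * c ^ 5 + c ^ 6) * x ^ 4 ≤ 320 := by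
  have h := psi_bernstein_form_nonneg c (2 - c) x (1 - x) hc0 (by linarith) hx0 (by linarith)
  ring_nf at h ⊢
  linarith
end

section
/- Let ϑ(c,x,y) = (5/4)c⁶ + (4 - c²)·[ (13/2)c⁴x + 2c⁴x² + (37c² - (37/4)c⁴)x² + (4c² - c⁴)x⁴ + (236/7 + 7(c² - 18/7)²)x³ + (1 - x²)(2c(4 - c²)x(1 + 2x) + 4c³(1 + 3x))y + 4(1 - x²)(3c²x + (4 - c²)(5 + x²))y² + 12(c² + 2(4 - c²)x)(1 - x²)(1 - y²) ]. Then ϑ(c,x,y) ≤ 320 for all real c, x, y with 0 ≤ c ≤ 2, 0 ≤ x ≤ 1 and 0 ≤ y ≤ 1. -/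
/-- The bound at `y = 0`, with half of the linear coefficient added; Bernstein certificate. -/
theorem aux_zero (c x : ℝ) (hc0 : 0 ≤ c) (hc1 : c ≤ 2) (hx0 : 0 ≤ x) (hx1 : x ≤ 1) :
    0 ≤ 320 - ((5 / 4) * c ^ 6 + (4 - c ^ 2) *
      ((13 / 2) * c ^ 4 * x + 2 * c ^ 4 * x ^ 2 + (37 * c ^ 2 - (37 / 4) * c ^ 4) * x ^ 2 +
        (4 * c ^ 2 - c ^ 4) * x ^ 4 + (236 / 7 + 7 * (c ^ 2 - 18 / 7) ^ 2) * x ^ 3 +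
        (1 / 2) * ((1 - x ^ 2) * (2 * c * (4 - c ^ 2) * x * (1 + 2 * x) + 4 * c ^ 3 * (1 + 3 * x))) +
        12 * (c ^ 2 + 2 * (4 - c ^ 2) * x) * (1 - x ^ 2))) := by
  obtain ⟨d, hd⟩ : ∃ d, d = 2 - c := ⟨_, rfl⟩
  obtain ⟨u, hu⟩ : ∃ u, u = 1 - x := ⟨_, rfl⟩
  have hd0 : 0 ≤ d := by linarith
  have hu0 : 0 ≤ u := by linarith
  have key : 0 ≤ 
      c ^ 0 * d ^ 6 * ((5) * x ^ 0 * u ^ 4 + (14) * x ^ 1 * u ^ 3 + (12) * x ^ 2 * u ^ 2 + (3) * x ^ 3 * u ^ 1) +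
      c ^ 1 * d ^ 5 * ((30) * x ^ 0 * u ^ 4 + (167/2) * x ^ 1 * u ^ 3 + (139/2) * x ^ 2 * u ^ 2 + (15) * x ^ 3 * u ^ 1) +
      c ^ 2 * d ^ 4 * ((72) * x ^ 0 * u ^ 4 + (415/2) * x ^ 1 * u ^ 3 + (717/4) * x ^ 2 * u ^ 2 + (87/2) * x ^ 3 * u ^ 1 + (15/4) * x ^ 4 * u ^ 0) +
      c ^ 3 * d ^ 3 * ((87) * x ^ 0 * u ^ 4 + (269) * x ^ 1 * u ^ 3 + (253) * x ^ 2 * u ^ 2 + (82) * x ^ 3 * u ^ 1 + (15) * x ^ 4 * u ^ 0) +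
      c ^ 4 * d ^ 2 * ((57) * x ^ 0 * u ^ 4 + (373/2) * x ^ 1 * u ^ 3 + (385/2) * x ^ 2 * u ^ 2 + (163/2) * x ^ 3 * u ^ 1 + (37/2) * x ^ 4 * u ^ 0) +
      c ^ 5 * d ^ 1 * ((22) * x ^ 0 * u ^ 4 + (69) * x ^ 1 * u ^ 3 + (79) * x ^ 2 * u ^ 2 + (39) * x ^ 3 * u ^ 1 + (7) * x ^ 4 * u ^ 0) +
      c ^ 6 * d ^ 0 * ((15/4) * x ^ 0 * u ^ 4 + (15) * x ^ 1 * u ^ 3 + (45/2) * x ^ 2 * u ^ 2 + (15) * x ^ 3 * u ^ 1 + (15/4) * x ^ 4 * u ^ 0) := by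
    positivity
  refine key.trans_eq ?_
  subst hd hu
  ring

/-- The bound at `y = 1`; Bernstein certificate after removing a square. -/
theorem aux_one (c x : ℝ) (hc0 : 0 ≤ c) (hc1 : c ≤ 2) (hx0 : 0 ≤ x) (hx1 : x ≤ 1) :
    0 ≤ 320 - ((5 / 4) * c ^ 6 + (4 - c ^ 2) *
      ((13 / 2) * c ^ 4 * x + 2 * c ^ 4 * x ^ 2 + (37 * c ^ 2 - (37 / 4) * c ^ 4) * x ^ 2 +
        (4 * c ^ 2 - c ^ 4) * x ^ 4 + (236 / 7 + 7 * (c ^ 2 - 18 / 7) ^ 2) * x ^ 3 +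
        (1 - x ^ 2) * (2 * c * (4 - c ^ 2) * x * (1 + 2 * x) + 4 * c ^ 3 * (1 + 3 * x)) +
        4 * (1 - x ^ 2) * (3 * c ^ 2 * x + (4 - c ^ 2) * (5 + x ^ 2)))) := by
  obtain ⟨d, hd⟩ : ∃ d, d = 2 - c := ⟨_, rfl⟩
  obtain ⟨u, hu⟩ : ∃ u, u = 1 - x := ⟨_, rfl⟩
  have hd0 : 0 ≤ d := by linarith
  have hu0 : 0 ≤ u := by linarith
  have key : 0 ≤ 8 * (c - x) ^ 2 * u * d +
      c ^ 0 * d ^ 6 * ((15/4) * x ^ 2 * u ^ 2 + (11/4) * x ^ 3 * u ^ 1) +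
      c ^ 1 * d ^ 5 * ((79/4) * x ^ 2 * u ^ 2 + (47/4) * x ^ 3 * u ^ 1) +
      c ^ 2 * d ^ 4 * ((9) * x ^ 0 * u ^ 4 + (33) * x ^ 1 * u ^ 3 + (285/4) * x ^ 2 * u ^ 2 + (29) * x ^ 3 * u ^ 1 + (15/4) * x ^ 4 * u ^ 0) +
      c ^ 3 * d ^ 3 * ((35) * x ^ 0 * u ^ 4 + (123) * x ^ 1 * u ^ 3 + (295/2) * x ^ 2 * u ^ 2 + (101/2) * x ^ 3 * u ^ 1 + (15) * x ^ 4 * u ^ 0) +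
      c ^ 4 * d ^ 2 * ((46) * x ^ 0 * u ^ 4 + (295/2) * x ^ 1 * u ^ 3 + (545/4) * x ^ 2 * u ^ 2 + (181/4) * x ^ 3 * u ^ 1 + (37/2) * x ^ 4 * u ^ 0) +
      c ^ 5 * d ^ 1 * ((25) * x ^ 0 * u ^ 4 + (71) * x ^ 1 * u ^ 3 + (247/4) * x ^ 2 * u ^ 2 + (91/4) * x ^ 3 * u ^ 1 + (7) * x ^ 4 * u ^ 0) +
      c ^ 6 * d ^ 0 * ((15/4) * x ^ 0 * u ^ 4 + (15) * x ^ 1 * u ^ 3 + (45/2) * x ^ 2 * u ^ 2 + (15) * x ^ 3 * u ^ 1 + (15/4) * x ^ 4 * u ^ 0) := by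
    positivity
  refine key.trans_eq ?_
  subst hd hu
  ring

theorem vartheta_le_320 (c x y : ℝ) (hc0 : 0 ≤ c) (hc1 : c ≤ 2)
    (hx0 : 0 ≤ x) (hx1 : x ≤ 1) (hy0 : 0 ≤ y) (hy1 : y ≤ 1) :
    (5 / 4) * c ^ 6 + (4 - c ^ 2) *
      ((13 / 2) * c ^ 4 * x + 2 * c ^ 4 * x ^ 2 + (37 * c ^ 2 - (37 / 4) * c ^ 4) * x ^ 2 +
        (4 * c ^ 2 - c ^ 4) * x ^ 4 + (236 / 7 + 7 * (c ^ 2 - 18 / 7) ^ 2) * x ^ 3 +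
        (1 - x ^ 2) * (2 * c * (4 - c ^ 2) * x * (1 + 2 * x) + 4 * c ^ 3 * (1 + 3 * x)) * y +
        4 * (1 - x ^ 2) * (3 * c ^ 2 * x + (4 - c ^ 2) * (5 + x ^ 2)) * y ^ 2 +
        12 * (c ^ 2 + 2 * (4 - c ^ 2) * x) * (1 - x ^ 2) * (1 - y ^ 2)) ≤ 320 := by
  have h0 := aux_zero c x hc0 hc1 hx0 hx1
  have h1 := aux_one c x hc0 hc1 hx0 hx1
  have e1 : 0 ≤ 4 - c ^ 2 := by nlinarith
  have e2 : 0 ≤ 1 - x ^ 2 := by nlinarith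
  have e3 : 0 ≤ 1 - y ^ 2 := by nlinarith
  have h2 : 0 ≤ (4 - c ^ 2) * ((1 - x ^ 2) * (2 * c * (4 - c ^ 2) * x * (1 + 2 * x) + 4 * c ^ 3 * (1 + 3 * x))) * (1 - y) ^ 2 := by positivity
  have m0 := mul_nonneg e3 h0
  have m1 := mul_nonneg (sq_nonneg y) h1
  linear_combination m0 + m1 + (1 / 2) * h2
end

section
/- Let ϑ(c,x,y) be as defined below. Then ϑ(c,x,0) ≤ 320 for all real c, x with 0 ≤ c ≤ 2 and 0 ≤ x ≤ 1; explicitly, (5/4)c⁶ + (4 - c²)·( 96x - 16x³ + c⁴((13/2)x - (29/4)x² + 7x³ - x⁴) + c²(12 - 24x + 25x² - 12x³ + 4x⁴) ) ≤ 320. -/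
theorem vartheta_face_y_zero (c x : ℝ) (hc0 : 0 ≤ c) (hc1 : c ≤ 2)
    (hx0 : 0 ≤ x) (hx1 : x ≤ 1) :
    (5 / 4) * c ^ 6 + (4 - c ^ 2) *
      (96 * x - 16 * x ^ 3 + c ^ 4 * ((13 / 2) * x - (29 / 4) * x ^ 2 + 7 * x ^ 3 - x ^ 4) +
        c ^ 2 * (12 - 24 * x + 25 * x ^ 2 - 12 * x ^ 3 + 4 * x ^ 4)) ≤ 320 := by
  have e6 : c ^ 6 = (c ^ 2) ^ 3 := by ring
  have e4 : c ^ 4 = (c ^ 2) ^ 2 := by ring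
  have ht0 : 0 ≤ c ^ 2 := sq_nonneg c
  have ht4 : c ^ 2 ≤ 4 := by nlinarith
  rw [e6, e4]
  generalize c ^ 2 = t at ht0 ht4 ⊢
  have hx2 : x ^ 2 ≤ x := by nlinarith
  have hx20 : 0 ≤ x ^ 2 := sq_nonneg x
  have hx30 : 0 ≤ x ^ 3 := by positivity
  have h1x : 0 ≤ 1 - x := by linarith
  -- coefficient bounds, as differences from the value at x = 1
  have hQ : 0 ≤ 7 + (-7 + 17 * x - 8 * x ^ 2 + 4 * x ^ 3) := by linarith
  have hP : 0 ≤ 21 / 4 - 5 / 4 * x + 6 * x ^ 2 - x ^ 3 := by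
    have : x ^ 3 ≤ x ^ 2 := by nlinarith
    linarith
  have h1 := mul_nonneg ht0 hQ
  have h2 := mul_nonneg (sq_nonneg t) hP
  have hin : 0 ≤ (96 - 16 * (1 + x + x ^ 2)) + t ^ 2 * (21 / 4 - 5 / 4 * x + 6 * x ^ 2 - x ^ 3)
      + t * (-7 + 17 * x - 8 * x ^ 2 + 4 * x ^ 3) := by linarith
  have h3 := mul_nonneg (mul_nonneg (by linarith : 0 ≤ 4 - t) h1x) hin
  have h4 : 0 ≤ t * (60 - 16 * t + 4 * t ^ 2) :=
    mul_nonneg ht0 (by nlinarith [sq_nonneg (t - 2)])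
  linarith
end

section
/- Let ϑ(c,x,y) be as defined below. Then ϑ(c,0,y) ≤ 320 for all real c, y with 0 ≤ c ≤ 2 and 0 ≤ y ≤ 1; explicitly, (5/4)c⁶ + (4 - c²)·( 4c³y + 20(4 - c²)y² + 12c²(1 - y²) ) ≤ 320. -/
theorem vartheta_face_x_zero (c y : ℝ) (hc0 : 0 ≤ c) (hc1 : c ≤ 2)
    (hy0 : 0 ≤ y) (hy1 : y ≤ 1) :
    (5 / 4) * c ^ 6 + (4 - c ^ 2) *
      (4 * c ^ 3 * y + 20 * (4 - c ^ 2) * y ^ 2 + 12 * c ^ 2 * (1 - y ^ 2)) ≤ 320 := by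
  have hu0 : 0 ≤ c ^ 2 := by positivity
  have hu4 : c ^ 2 ≤ 4 := by nlinarith
  have ht0 : 0 ≤ y ^ 2 := by positivity
  have ht1 : y ^ 2 ≤ 1 := by nlinarith
  have h1 : 4 * c ^ 3 * y ≤ 4 * c ^ 2 * (1 + y ^ 2) := by
    have h : c * y ≤ 1 + y ^ 2 := by nlinarith [mul_nonneg (sub_nonneg.2 hc1) hy0, sq_nonneg (y - 1)]
    have := mul_le_mul_of_nonneg_left h (by positivity : 0 ≤ 4 * c ^ 2)
    linarith
  have h2 := mul_le_mul_of_nonneg_left h1 (sub_nonneg.2 hu4)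
  have h6 : c ^ 6 = (c ^ 2) ^ 3 := by ring
  rw [h6]
  generalize c ^ 2 = u at *
  generalize y ^ 2 = t at *
  -- the resulting bound is affine in t
  have hA : (5 / 4) * u ^ 3 + (4 - u) * (16 * u) ≤ 320 := by
    have : u ^ 3 ≤ 4 ^ 3 := pow_le_pow_left₀ hu0 hu4 3
    nlinarith [sq_nonneg (u - 2)]
  have hB : (5 / 4) * u ^ 3 + (4 - u) * (8 * u + 20 * (4 - u)) ≤ 320 := by
    have h : u ^ 2 ≤ 4 * u := by nlinarith
    have h' : u ^ 3 ≤ 4 * u ^ 2 := by nlinarith [mul_nonneg (sq_nonneg u) (sub_nonneg.2 hu4)]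
    nlinarith
  have a := mul_le_mul_of_nonneg_left hA (sub_nonneg.2 ht1)
  have b := mul_le_mul_of_nonneg_left hB ht0
  linarith
end

section
/- Let ϑ(c,x,y) be as defined below. Then ϑ(0,x,y) ≤ 320 for all real x, y with 0 ≤ x ≤ 1 and 0 ≤ y ≤ 1; explicitly, 384x - 64x³ + (320 - 384x - 256x² + 384x³ - 64x⁴)y² ≤ 320. -/
theorem vartheta_face_c_zero (x y : ℝ) (hx0 : 0 ≤ x) (hx1 : x ≤ 1)
    (hy0 : 0 ≤ y) (hy1 : y ≤ 1) :
    384 * x - 64 * x ^ 3 +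
      (320 - 384 * x - 256 * x ^ 2 + 384 * x ^ 3 - 64 * x ^ 4) * y ^ 2 ≤ 320 := by
  have hy : 0 ≤ 1 - y ^ 2 := by nlinarith
  have hx : 0 ≤ 1 - x := by linarith
  have h5 : 0 ≤ 5 - x - x ^ 2 := by nlinarith
  have h4 : 0 ≤ 4 - x := by linarith
  have h1 : 0 ≤ (1 - y ^ 2) * ((1 - x) * (5 - x - x ^ 2)) :=
    mul_nonneg hy (mul_nonneg hx h5)
  have h2 : 0 ≤ y ^ 2 * (x ^ 2 * ((1 - x) * (4 - x))) :=
    mul_nonneg (sq_nonneg y) (mul_nonneg (sq_nonneg x) (mul_nonneg hx h4))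
  linarith
end
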